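/- arXiv:2006.07670 — 2 statements merged into one kernel-verified Lean document; each statement's English description precedes it below -/
import Mathlib

section
/- (Proposition 2.1, Fokker–Planck equation.) Let θ be a solution of the nonlinear equation for the labeled graphon W with data (U, θ₀, B) as below, let μ̄_t = Law(θ_t) and let μ^x_t be a regular conditional distribution of θ_t given U = x. Then μ̄ solves the graphon-weighted nonlinear Fokker–Planck equation weakly: for every twice continuously differentiable f : 𝕋 → ℝ and every t ∈ [0,T], ∫_𝕋 f dμ̄_t − ∫_𝕋 f dμ̄₀ = ∫₀ᵗ [ ∫_𝕋 ( ½ f''(θ) + f'(θ) F(θ) ) μ̄_s(dθ) + ∫_{I×I} W(x,y) ( ∫_𝕋 ∫_𝕋 f'(θ) Γ(θ, u) μ^y_s(du) μ^x_s(dθ) ) dy dx ] ds. -/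
open MeasureTheory ProbabilityTheory Real Set Filter Topology

noncomputable section

/-- The one-dimensional torus `𝕋 = ℝ/(2πℤ)`. -/
abbrev Torus : Type := AddCircle (2 * Real.pi)

instance : Fact (0 < 2 * Real.pi) := ⟨by positivity⟩

/-- The label space `I = [0,1]`. -/
abbrev I01 : Set ℝ := Set.Icc (0:ℝ) 1

/-- `F` is bounded and Lipschitz. -/
def BddLip (F : Torus → ℝ) : Prop :=
  (∃ K : NNReal, LipschitzWith K F) ∧ ∃ M : ℝ, ∀ a, |F a| ≤ M

/-- `Γ` is bounded and Lipschitz (jointly on `𝕋 × 𝕋`). -/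
def BddLip2 (Γ : Torus → Torus → ℝ) : Prop :=
  (∃ K : NNReal, LipschitzWith K (fun p : Torus × Torus => Γ p.1 p.2)) ∧
    ∃ M : ℝ, ∀ a b, |Γ a b| ≤ M

/-- A labeled graphon: a symmetric measurable function `I² → [0,1]`. -/
def IsGraphon (W : ℝ → ℝ → ℝ) : Prop :=
  Measurable (fun p : ℝ × ℝ => W p.1 p.2) ∧ (∀ x y, W x y ∈ Set.Icc (0:ℝ) 1) ∧
    ∀ x y, W x y = W y x

/-- A standard Brownian motion on `[0,T]`: a continuous real-valued process starting at `0`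
whose increment `B_t − B_s` is Gaussian of mean `0` and variance `t − s` and is independent
of the past `(B_r)_{r ≤ s}`. -/
def IsStandardBM {Ω : Type*} [MeasurableSpace Ω] (T : ℝ) (P : Measure Ω)
    (B : Ω → ℝ → ℝ) : Prop :=
  (∀ ω, B ω 0 = 0) ∧ (∀ ω, ContinuousOn (B ω) (Set.Icc 0 T)) ∧
  (∀ s : ℝ, Measurable (fun ω => B ω s)) ∧
  (∀ s t : ℝ, 0 ≤ s → s ≤ t → t ≤ T →
    P.map (fun ω => B ω t - B ω s) = ProbabilityTheory.gaussianReal 0 (Real.toNNReal (t - s)) ∧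
    ProbabilityTheory.IndepFun (fun ω => B ω t - B ω s)
      (fun ω => (fun r : Set.Icc (0:ℝ) s => B ω r)) P)

/-- The integrated drift
`∫₀ᵗ F(p_s) ds + ∫₀ᵗ ∫_I W(x,y) ( ∫_𝕋 Γ(p_s, u) μ^y_s(du) ) dy ds`. -/
def drift (F : Torus → ℝ) (Γ : Torus → Torus → ℝ) (W : ℝ → ℝ → ℝ)
    (μ : ℝ → ℝ → Measure Torus) (x : ℝ) (p : ℝ → Torus) (t : ℝ) : ℝ :=
  (∫ s in Set.Icc 0 t, F (p s)) +
  ∫ s in Set.Icc 0 t, ∫ y in I01, W x y * ∫ u, Γ (p s) u ∂(μ y s)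

/-- The data `(U, θ0, B)` of the nonlinear equation: `U` uniform on `I`, `θ0` with law
`μ0`, `B` a standard Brownian motion, the three mutually independent. -/
def MeanFieldData {Ω : Type*} [MeasurableSpace Ω] (T : ℝ) (P : Measure Ω)
    (μ0 : Measure Torus) (U : Ω → ℝ) (θ0 : Ω → Torus) (B : Ω → ℝ → ℝ) : Prop :=
  Measurable U ∧ P.map U = volume.restrict I01 ∧
  Measurable θ0 ∧ P.map θ0 = μ0 ∧
  IsStandardBM T P B ∧
  ProbabilityTheory.IndepFun U θ0 P ∧
  ProbabilityTheory.IndepFun (fun ω => (U ω, θ0 ω)) (fun ω => B ω) P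

/-- A continuous `𝕋`-valued process `θ` is a solution of the nonlinear equation for the
labeled graphon `W` with data `(U, θ0, B)` if, `P`-a.s., for all `t ∈ [0,T]`,
`θ_t = θ0 + π( ∫₀ᵗ F(θ_s) ds + ∫₀ᵗ ∫_I W(U,y) (∫_𝕋 Γ(θ_s,u) μ^y_s(du)) dy ds + B_t )`,
where `μ^y_s` (here the kernel `μker y s`) is a regular conditional distribution of `θ_s`
given `U = y`. -/
structure IsMeanFieldSolution {Ω : Type*} [MeasurableSpace Ω] (T : ℝ) (P : Measure Ω)
    (F : Torus → ℝ) (Γ : Torus → Torus → ℝ) (W : ℝ → ℝ → ℝ)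
    (U : Ω → ℝ) (θ0 : Ω → Torus) (B : Ω → ℝ → ℝ)
    (θ : Ω → ℝ → Torus) (μker : ℝ → ℝ → Measure Torus) : Prop where
  meas : ∀ s : ℝ, Measurable (fun ω => θ ω s)
  cont : ∀ ω, ContinuousOn (θ ω) (Set.Icc 0 T)
  kerMeas : ∀ s : ℝ, Measurable (fun y => μker y s)
  kerProb : ∀ y s, IsProbabilityMeasure (μker y s)
  disint : ∀ s ∈ Set.Icc (0:ℝ) T, ∀ S : Set ℝ, MeasurableSet S →
    ∀ A : Set Torus, MeasurableSet A →
      P {ω | U ω ∈ S ∧ θ ω s ∈ A} = ∫⁻ y in S ∩ I01, μker y s A ∂volume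
  sde : ∀ᵐ ω ∂P, ∀ t ∈ Set.Icc (0:ℝ) T,
    θ ω t = θ0 ω + ((drift F Γ W μker (U ω) (θ ω) t + B ω t : ℝ) : Torus)

theorem torus_norm_le (x : ℝ) : ‖(x : Torus)‖ ≤ |x| := by
  simpa using QuotientAddGroup.norm_mk_le_norm (S := AddSubgroup.zmultiples (2 * Real.pi)) (m := x)

theorem hasDeriv_shift {f f' : Torus → ℝ}
    (hf : ∀ r : ℝ, HasDerivAt (fun s : ℝ => f (s : Torus)) (f' (r : Torus)) r)
    (v : Torus) (y : ℝ) :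
    HasDerivAt (fun s : ℝ => f (v + (s : Torus))) (f' (v + (y : Torus))) y := by
  obtain ⟨r, rfl⟩ := QuotientAddGroup.mk_surjective v
  have h := (hf (r + y)).comp_const_add r y
  simpa using h

theorem cont_of_deriv {f f' : Torus → ℝ}
    (hf : ∀ r : ℝ, HasDerivAt (fun s : ℝ => f (s : Torus)) (f' (r : Torus)) r) :
    Continuous f := by
  have : Continuous (fun s : ℝ => f (s : Torus)) :=
    continuous_iff_continuousAt.2 fun r => (hf r).continuousAt
  exact (QuotientAddGroup.isQuotientMap_mk (N := AddSubgroup.zmultiples (2 * Real.pi))).continuous_iff.2 this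

theorem torus_bdd {f : Torus → ℝ} (hf : Continuous f) : ∃ M : ℝ, 0 ≤ M ∧ ∀ v, |f v| ≤ M := by
  obtain ⟨M, hM⟩ := isCompact_univ.exists_bound_of_continuousOn (f := f) hf.continuousOn
  exact ⟨M, (norm_nonneg _).trans (hM 0 trivial), fun v => hM v trivial⟩

theorem quad_bound {g g1 : ℝ → ℝ} (hg : ∀ y, HasDerivAt g (g1 y) y) {ε y : ℝ} (hε : 0 ≤ ε)
    (h : ∀ z, |z| ≤ |y| → |g1 z| ≤ ε * |z|) : |g y - g 0| ≤ ε * y ^ 2 := by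
  have := Convex.norm_image_sub_le_of_norm_hasDerivWithin_le (f := g) (f' := g1)
    (s := Icc (-|y|) |y|) (x := 0) (y := y) (C := ε * |y|)
    (fun x _ => (hg x).hasDerivWithinAt)
    (fun x hx => (h x (abs_le.2 hx)).trans (by
      have := abs_le.2 hx
      have h0 : |x| ≤ |y| := this
      exact mul_le_mul_of_nonneg_left h0 hε)) (convex_Icc _ _)
    ⟨by simp, by simp⟩ (abs_le.1 le_rfl)
  simp only [Real.norm_eq_abs, sub_zero] at this
  nlinarith [sq_abs y]

/-- Second order expansion: bound. -/
theorem taylor_bound {f f' f'' : Torus → ℝ}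
    (hf : ∀ r : ℝ, HasDerivAt (fun s : ℝ => f (s : Torus)) (f' (r : Torus)) r)
    (hf' : ∀ r : ℝ, HasDerivAt (fun s : ℝ => f' (s : Torus)) (f'' (r : Torus)) r)
    {M : ℝ} (hM0 : 0 ≤ M) (hM : ∀ v, |f'' v| ≤ M) (v : Torus) (y : ℝ) :
    |f (v + (y : Torus)) - f v - y * f' v| ≤ M * y ^ 2 := by
  have h1 : ∀ z : ℝ, |f' (v + (z : Torus)) - f' v| ≤ M * |z| := by
    intro z
    have := Convex.norm_image_sub_le_of_norm_hasDerivWithin_le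
      (f := fun s : ℝ => f' (v + (s : Torus))) (f' := fun s : ℝ => f'' (v + (s : Torus)))
      (s := univ) (x := 0) (y := z) (C := M)
      (fun x _ => (hasDeriv_shift hf' v x).hasDerivWithinAt) (fun x _ => hM _) convex_univ
      trivial trivial
    simpa using this
  have := quad_bound (g := fun y : ℝ => f (v + (y : Torus)) - f v - y * f' v)
    (g1 := fun y : ℝ => f' (v + (y : Torus)) - f' v) (ε := M) (y := y)
    (fun y => by
      have := ((hasDeriv_shift hf v y).sub_const (f v)).sub ((hasDerivAt_id y).mul_const (f' v))
      exact this.congr_deriv (by simp)) hM0 (fun z _ => h1 z)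
  simpa using this

/-- Second order expansion: pointwise limit. -/
theorem taylor_lim {f f' f'' : Torus → ℝ}
    (hf : ∀ r : ℝ, HasDerivAt (fun s : ℝ => f (s : Torus)) (f' (r : Torus)) r)
    (hf' : ∀ r : ℝ, HasDerivAt (fun s : ℝ => f' (s : Torus)) (f'' (r : Torus)) r)
    (v : Torus) (z : ℝ) :
    Tendsto (fun h : ℝ => (f (v + ((√h * z : ℝ) : Torus)) - f v - √h * z * f' v) / h) (𝓝[>] 0)
      (𝓝 (1 / 2 * f'' v * z ^ 2)) := by
  have key : ∀ ε > 0, ∃ δ > 0, ∀ y : ℝ, |y| < δ →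
      |f (v + (y : Torus)) - f v - y * f' v - 1 / 2 * f'' v * y ^ 2| ≤ ε * y ^ 2 := by
    intro ε hε
    have h := hasDeriv_shift hf' v 0
    rw [hasDerivAt_iff_isLittleO] at h
    have h2 := h.def hε
    rw [Metric.eventually_nhds_iff] at h2
    obtain ⟨δ, hδ, h2⟩ := h2
    refine ⟨δ, hδ, fun y hy => ?_⟩
    have := quad_bound
      (g := fun y : ℝ => f (v + (y : Torus)) - f v - y * f' v - 1 / 2 * f'' v * y ^ 2)
      (g1 := fun y : ℝ => f' (v + (y : Torus)) - f' v - y * f'' v) (ε := ε) (y := y)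
      (fun y => by
        have := (((hasDeriv_shift hf v y).sub_const (f v)).sub
          ((hasDerivAt_id y).mul_const (f' v))).sub
          (((hasDerivAt_pow 2 y)).const_mul (1 / 2 * f'' v))
        exact this.congr_deriv (by simp; ring)) hε.le (fun z hz => by
          have := @h2 z (by simpa using lt_of_le_of_lt hz hy)
          simpa using this)
    simpa using this
  rw [Metric.tendsto_nhds]
  intro ε hε
  obtain ⟨δ, hδ, hk⟩ := key (ε / (z ^ 2 + 1) / 2) (by positivity)
  have hc : Tendsto (fun h : ℝ => √h * z) (𝓝[>] 0) (𝓝 0) := by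
    have : Continuous (fun h : ℝ => √h * z) := by fun_prop
    have := this.tendsto 0
    simp only [Real.sqrt_zero, zero_mul] at this
    exact this.mono_left nhdsWithin_le_nhds
  have hc2 := (Metric.tendsto_nhds.1 hc) δ hδ
  filter_upwards [hc2, self_mem_nhdsWithin] with h hh hpos
  have hpos : 0 < h := hpos
  have := hk (√h * z) (by simpa using hh)
  rw [Real.dist_eq]
  have hsq : (√h * z) ^ 2 = h * z ^ 2 := by rw [mul_pow, Real.sq_sqrt hpos.le]
  rw [hsq] at this
  have e : (f (v + ((√h * z : ℝ) : Torus)) - f v - √h * z * f' v) / h - 1 / 2 * f'' v * z ^ 2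
    = (f (v + ((√h * z : ℝ) : Torus)) - f v - √h * z * f' v - 1 / 2 * f'' v * (h * z ^ 2)) / h := by
    field_simp
  rw [e, abs_div, abs_of_pos hpos, div_lt_iff₀ hpos]
  refine this.trans_lt ?_
  have : ε / (z ^ 2 + 1) / 2 * z ^ 2 < ε := by
    rw [div_div, div_mul_eq_mul_div, div_lt_iff₀ (by positivity)]
    nlinarith [sq_nonneg z]
  nlinarith

theorem gauss_limit {f f' f'' : Torus → ℝ} (hc'' : Continuous f'')
    (hf : ∀ r : ℝ, HasDerivAt (fun s : ℝ => f (s : Torus)) (f' (r : Torus)) r)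
    (hf' : ∀ r : ℝ, HasDerivAt (fun s : ℝ => f' (s : Torus)) (f'' (r : Torus)) r)
    (ν : Measure Torus) [IsProbabilityMeasure ν] :
    Tendsto (fun h : ℝ => ((∫ p, f (p.1 + ((√h * p.2 : ℝ) : Torus)) ∂(ν.prod (gaussianReal 0 1)))
      - ∫ v, f v ∂ν) / h) (𝓝[>] 0) (𝓝 (∫ v, 1 / 2 * f'' v ∂ν)) := by
  have cf := cont_of_deriv hf
  have cf' := cont_of_deriv hf'
  obtain ⟨M, hM0, hM⟩ := torus_bdd hc''
  obtain ⟨M0, hM00, hM0'⟩ := torus_bdd cf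
  have ccoe : Continuous (fun r : ℝ => (r : Torus)) := AddCircle.continuous_mk' _
  have i1 : Integrable (fun z : ℝ => z) (gaussianReal 0 1) := by
    have := (memLp_id_gaussianReal (μ := 0) (v := 1) 1)
    exact memLp_one_iff_integrable.1 (by simpa [Function.id_def] using this)
  have i2 : Integrable (fun z : ℝ => z ^ 2) (gaussianReal 0 1) := by
    have := (memLp_id_gaussianReal (μ := 0) (v := 1) 2)
    exact MemLp.integrable_sq (f := fun z : ℝ => z) (by simpa [Function.id_def] using this)
  have e2 : ∫ z : ℝ, z ^ 2 ∂(gaussianReal 0 1) = 1 := by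
    have := variance_id_gaussianReal (μ := 0) (v := 1)
    rw [variance_of_integral_eq_zero measurable_id.aemeasurable (by simp)] at this
    simpa using this
  have eqn : ∀ h : ℝ, ((∫ p, f (p.1 + ((√h * p.2 : ℝ) : Torus)) ∂(ν.prod (gaussianReal 0 1)))
      - ∫ v, f v ∂ν) / h = ∫ p : Torus × ℝ,
        (f (p.1 + ((√h * p.2 : ℝ) : Torus)) - f p.1 - √h * p.2 * f' p.1) / h
          ∂(ν.prod (gaussianReal 0 1)) := by
    intro h
    rw [integral_div]
    congr 1
    have j1 : Integrable (fun p : Torus × ℝ => f (p.1 + ((√h * p.2 : ℝ) : Torus)))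
        (ν.prod (gaussianReal 0 1)) := by
      refine Integrable.of_bound (C := M0) ?_ (ae_of_all _ fun p => hM0' _)
      have : Continuous (fun p : Torus × ℝ => f (p.1 + ((√h * p.2 : ℝ) : Torus))) := by fun_prop
      exact this.aestronglyMeasurable
    have j2 : Integrable (fun p : Torus × ℝ => f p.1) (ν.prod (gaussianReal 0 1)) := by
      refine Integrable.of_bound (C := M0) ?_ (ae_of_all _ fun p => hM0' _)
      have : Continuous (fun p : Torus × ℝ => f p.1) := by fun_prop
      exact this.aestronglyMeasurable
    have k' : Integrable f' ν := by
      obtain ⟨M1, _, hM1⟩ := torus_bdd cf'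
      exact Integrable.of_bound (C := M1) cf'.aestronglyMeasurable (ae_of_all _ hM1)
    have e3 : (fun p : Torus × ℝ => √h * p.2 * f' p.1) = fun p : Torus × ℝ => f' p.1 * (√h * p.2) := by
      ext p; ring
    have j3 : Integrable (fun p : Torus × ℝ => √h * p.2 * f' p.1) (ν.prod (gaussianReal 0 1)) := by
      rw [e3]
      exact k'.mul_prod (i1.const_mul (√h))
    have z3 : ∫ p : Torus × ℝ, √h * p.2 * f' p.1 ∂(ν.prod (gaussianReal 0 1)) = 0 := by
      rw [e3, integral_prod_mul (μ := ν) (ν := gaussianReal 0 1) f' (fun z => √h * z),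
        integral_const_mul, integral_id_gaussianReal]
      simp
    have z2 : ∫ p : Torus × ℝ, f p.1 ∂(ν.prod (gaussianReal 0 1)) = ∫ v, f v ∂ν := by
      rw [integral_fun_fst]; simp
    have j12 : Integrable (fun p : Torus × ℝ => f (p.1 + ((√h * p.2 : ℝ) : Torus)) - f p.1)
        (ν.prod (gaussianReal 0 1)) := j1.sub j2
    rw [integral_sub j12 j3, integral_sub j1 j2, z3, z2, sub_zero]
  simp_rw [eqn]
  have lim : ∫ v, 1 / 2 * f'' v ∂ν
      = ∫ p : Torus × ℝ, (1 / 2 * f'' p.1) * p.2 ^ 2 ∂(ν.prod (gaussianReal 0 1)) := by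
    rw [integral_prod_mul (μ := ν) (ν := gaussianReal 0 1) (fun v => 1 / 2 * f'' v)
      (fun z => z ^ 2), e2, mul_one]
  rw [lim]
  refine tendsto_integral_filter_of_dominated_convergence (fun p => M * p.2 ^ 2) ?_ ?_ ?_ ?_
  · refine Eventually.of_forall fun h => ?_
    have : Continuous (fun p : Torus × ℝ => f (p.1 + ((√h * p.2 : ℝ) : Torus)) - f p.1
      - √h * p.2 * f' p.1) := by fun_prop
    exact (this.div_const h).aestronglyMeasurable
  · filter_upwards [self_mem_nhdsWithin] with h hpos
    have hpos : 0 < h := hpos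
    refine ae_of_all _ fun p => ?_
    have := taylor_bound hf hf' hM0 hM p.1 (√h * p.2)
    rw [mul_pow, Real.sq_sqrt hpos.le] at this
    rw [Real.norm_eq_abs, abs_div, abs_of_pos hpos, div_le_iff₀ hpos]
    linarith
  · exact (i2.comp_snd ν).const_mul M
  · exact ae_of_all _ fun p => taylor_lim hf hf' p.1 p.2

/-- Explicit Euler scheme on the torus. -/
def eulerT (b : ℝ → Torus → ℝ → ℝ) (x : ℝ) (v0 : Torus) (β : ℝ → ℝ) (δ : ℝ) : ℕ → Torus
  | 0 => v0
  | k + 1 => eulerT b x v0 β δ k +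
      ((b x (eulerT b x v0 β δ k) (k * δ) * δ + (β ((k + 1) * δ) - β (k * δ)) : ℝ) : Torus)

theorem eulerT_congr (b : ℝ → Torus → ℝ → ℝ) (x : ℝ) (v0 : Torus) (β β' : ℝ → ℝ) (δ : ℝ) (n : ℕ)
    (h : ∀ k : ℕ, k ≤ n → β (k * δ) = β' (k * δ)) :
    eulerT b x v0 β δ n = eulerT b x v0 β' δ n := by
  induction n with
  | zero => rfl
  | succ n ih =>
    have h1 := h (n + 1) le_rfl
    have h2 := h n (Nat.le_succ n)
    push_cast at h1
    rw [eulerT, eulerT, ih (fun k hk => h k (hk.trans (Nat.le_succ n))), h1, h2]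

theorem eulerT_meas (b : ℝ → Torus → ℝ → ℝ)
    (hb : ∀ s, Measurable (fun p : ℝ × Torus => b p.1 p.2 s)) {s : ℝ} (hs : 0 ≤ s) (δ : ℝ) (n : ℕ) :
    Measurable (fun q : (ℝ × Torus) × (Set.Icc (0:ℝ) s → ℝ) =>
      eulerT b q.1.1 q.1.2 (fun r => q.2 (projIcc 0 s hs r)) δ n) := by
  have ccoe : Measurable (fun r : ℝ => (r : Torus)) := (AddCircle.continuous_mk' _).measurable
  induction n with
  | zero => simp only [eulerT]; fun_prop
  | succ n ih =>
    simp only [eulerT]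
    have h1 : Measurable (fun q : (ℝ × Torus) × (Set.Icc (0:ℝ) s → ℝ) =>
      b q.1.1 (eulerT b q.1.1 q.1.2 (fun r => q.2 (projIcc 0 s hs r)) δ n) (n * δ)) :=
      (hb (n * δ)).comp (measurable_fst.fst.prodMk ih)
    have h2 : ∀ r, Measurable (fun q : (ℝ × Torus) × (Set.Icc (0:ℝ) s → ℝ) =>
      q.2 (projIcc 0 s hs r)) := fun r => (measurable_pi_apply _).comp measurable_snd
    exact ih.add (ccoe.comp ((h1.mul_const δ).add ((h2 _).sub (h2 _))))

theorem eulerT_tendsto (b : ℝ → Torus → ℝ → ℝ) (x : ℝ) (p : ℝ → Torus) (β : ℝ → ℝ) (v0 : Torus)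
    {s L : ℝ} (hs : 0 ≤ s) (hL : 0 ≤ L)
    (hLip : ∀ v w r, |b x v r - b x w r| ≤ L * ‖v - w‖)
    (hc : ContinuousOn (fun r => b x (p r) r) (Icc 0 s)) (hβ : β 0 = 0)
    (hp : ∀ r ∈ Icc 0 s, p r = v0 + (((∫ q in (0:ℝ)..r, b x (p q) q) + β r : ℝ) : Torus)) :
    Tendsto (fun n : ℕ => eulerT b x v0 β (s / (n + 1)) (n + 1)) atTop (𝓝 (p s)) := by
  rw [Metric.tendsto_atTop]
  intro ε₀ hε₀
  obtain ⟨ε, hε, hεlt⟩ : ∃ ε > 0, s * ε * Real.exp (L * s) < ε₀ := by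
    refine ⟨ε₀ / (s * Real.exp (L * s) + 1), by positivity, ?_⟩
    have : 0 ≤ s * Real.exp (L * s) := by positivity
    rw [mul_div_assoc', div_mul_eq_mul_div, div_lt_iff₀ (by positivity)]
    nlinarith
  have huc := isCompact_Icc.uniformContinuousOn_of_continuous hc
  rw [Metric.uniformContinuousOn_iff] at huc
  obtain ⟨η, hη, huc⟩ := huc ε hε
  obtain ⟨N, hN⟩ := exists_nat_gt (s / η)
  refine ⟨N, fun n hn => ?_⟩
  have hn1 : (0:ℝ) < n + 1 := by positivity
  obtain ⟨δ, hδ⟩ : ∃ δ, δ = s / (n + 1) := ⟨_, rfl⟩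
  have hδ0 : 0 ≤ δ := by rw [hδ]; positivity
  have hδη : δ < η := by
    rw [hδ, div_lt_iff₀ hn1]
    rw [div_lt_iff₀ hη] at hN
    have : (N:ℝ) ≤ n := by exact_mod_cast hn
    nlinarith
  have hδs : (n + 1) * δ = s := by rw [hδ]; field_simp
  rw [← hδ]
  have hmem : ∀ k : ℕ, k ≤ n + 1 → (k:ℝ) * δ ∈ Icc 0 s := by
    intro k hk
    refine ⟨by positivity, ?_⟩
    rw [← hδs]
    have : (k:ℝ) ≤ n + 1 := by exact_mod_cast hk
    gcongr
  have hint : ∀ a ∈ Icc 0 s, ∀ c ∈ Icc 0 s,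
      IntervalIntegrable (fun q => b x (p q) q) volume a c := by
    intro a ha c hcc
    exact (hc.mono (ordConnected_Icc.uIcc_subset ha hcc)).intervalIntegrable
  have main : ∀ k : ℕ, k ≤ n + 1 → ‖p (k * δ) - eulerT b x v0 β δ k‖
      ≤ k * δ * ε * Real.exp (L * (k * δ)) := by
    intro k
    induction k with
    | zero =>
      intro _
      have := hp 0 ⟨le_rfl, hs⟩
      simp [eulerT, this, hβ]
    | succ k ih =>
      intro hk
      have ihk := ih (by omega)
      have m1 := hmem k (by omega)
      have m2 := hmem (k + 1) hk
      push_cast at m2 ⊢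
      set e := eulerT b x v0 β δ k with he
      have hstep : p ((k + 1) * δ) - eulerT b x v0 β δ (k + 1) = (p (k * δ) - e) +
          ((∫ q in (k * δ)..((k + 1) * δ), (b x (p q) q - b x e (k * δ)) : ℝ) : Torus) := by
        have i1 := intervalIntegral.integral_interval_sub_left
          (hint 0 ⟨le_rfl, hs⟩ _ m2) (hint 0 ⟨le_rfl, hs⟩ _ m1)
        rw [intervalIntegral.integral_sub (hint _ m1 _ m2) (by simp), ← i1,
          intervalIntegral.integral_const, hp _ m1, hp _ m2, eulerT, ← he]
        simp only [smul_eq_mul]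
        have : ((k:ℝ) + 1) * δ - k * δ = δ := by ring
        rw [this]
        rw [mul_comm δ]
        simp only [AddCircle.coe_add, AddCircle.coe_sub]
        abel
      rw [hstep]
      refine (norm_add_le _ _).trans ?_
      have hle : ‖∫ q in (k * δ)..((k + 1) * δ), (b x (p q) q - b x e (k * δ))‖
          ≤ (ε + L * ‖p (k * δ) - e‖) * |(k + 1) * δ - k * δ| := by
        refine intervalIntegral.norm_integral_le_of_norm_le_const fun q hq => ?_
        rw [uIoc_of_le (by nlinarith)] at hq
        have hq' : q ∈ Icc 0 s := ⟨m1.1.trans hq.1.le, hq.2.trans m2.2⟩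
        have a1 := huc q hq' _ m1 (by
          rw [Real.dist_eq, abs_of_nonneg (by linarith [hq.1])]
          linarith [hq.2])
        have a2 := hLip (p (k * δ)) e (k * δ)
        rw [Real.dist_eq] at a1
        rw [Real.norm_eq_abs]
        calc _ = |(b x (p q) q - b x (p (k * δ)) (k * δ))
              + (b x (p (k * δ)) (k * δ) - b x e (k * δ))| := by congr 1; ring
          _ ≤ _ := (abs_add_le _ _).trans (by linarith)
      have e1 : ((k:ℝ) + 1) * δ - k * δ = δ := by ring
      rw [e1, abs_of_nonneg hδ0] at hle
      have hle2 := (torus_norm_le _).trans hle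
      set d := ‖p (k * δ) - e‖
      have hexp : 1 + L * δ ≤ Real.exp (L * δ) := by linarith [Real.add_one_le_exp (L * δ)]
      have hexp1 : 1 ≤ Real.exp (L * ((k + 1) * δ)) := Real.one_le_exp (by positivity)
      have hsplit : Real.exp (L * ((k + 1) * δ)) = Real.exp (L * (k * δ)) * Real.exp (L * δ) := by
        rw [← Real.exp_add]; ring_nf
      have d0 : 0 ≤ d := norm_nonneg _
      calc d + _ ≤ d + (ε + L * d) * δ := by linarith
        _ = d * (1 + L * δ) + δ * ε := by ring
        _ ≤ (k * δ * ε * Real.exp (L * (k * δ))) * Real.exp (L * δ)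
            + δ * ε * Real.exp (L * ((k + 1) * δ)) := by
          refine add_le_add (mul_le_mul ihk hexp (by positivity) (by positivity)) ?_
          exact le_mul_of_one_le_right (by positivity) hexp1
        _ = _ := by rw [hsplit]; ring
  have := main (n + 1) le_rfl
  push_cast at this
  rw [hδs] at this
  rw [dist_comm, dist_eq_norm]
  linarith

/-- Independence of an increment from the data and the past. -/
theorem indep_incr {Ω : Type*} [MeasurableSpace Ω] (P : Measure Ω) [IsProbabilityMeasure P]
    {α β : Type*} [MeasurableSpace α] [MeasurableSpace β]
    (X : Ω → α) (Y : Ω → β) (Z : Ω → ℝ) (hX : Measurable X) (hY : Measurable Y) (hZ : Measurable Z)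
    (h1 : IndepFun Z Y P) (h2 : IndepFun X (fun ω => (Y ω, Z ω)) P) :
    IndepFun (fun ω => (X ω, Y ω)) Z P := by
  rw [indepFun_iff_map_prod_eq_prod_map_map (by fun_prop) (by fun_prop)]
  have e1 := (indepFun_iff_map_prod_eq_prod_map_map (by fun_prop) (by fun_prop)).1 h2
  have e2 := (indepFun_iff_map_prod_eq_prod_map_map (by fun_prop) (by fun_prop)).1 h1.symm
  have h3 : IndepFun X Y P := h2.comp measurable_id measurable_fst
  have e3 := (indepFun_iff_map_prod_eq_prod_map_map (by fun_prop) (by fun_prop)).1 h3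
  have := Measure.isProbabilityMeasure_map (μ := P) hX.aemeasurable
  have := Measure.isProbabilityMeasure_map (μ := P) hY.aemeasurable
  have := Measure.isProbabilityMeasure_map (μ := P) hZ.aemeasurable
  apply (MeasurableEquiv.prodAssoc (α := α) (β := β) (γ := ℝ)).map_measurableEquiv_injective
  rw [e3, Measure.prodAssoc_prod, ← e2, ← e1, Measure.map_map (by fun_prop) (by fun_prop)]
  rfl

/-- The law of `θ_s + π(B_{s+h} - B_s)`. -/
theorem incr_law {Ω : Type*} [MeasurableSpace Ω] {T : ℝ}
    (P : Measure Ω) [IsProbabilityMeasure P] {μ0 : Measure Torus}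
    {U : Ω → ℝ} {θ0 : Ω → Torus} {B : Ω → ℝ → ℝ}
    (hdata : MeanFieldData T P μ0 U θ0 B)
    {θ : Ω → ℝ → Torus} (hmeas : ∀ s : ℝ, Measurable (fun ω => θ ω s))
    (b : ℝ → Torus → ℝ → ℝ) (hb : ∀ s, Measurable (fun p : ℝ × Torus => b p.1 p.2 s))
    {L : ℝ} (hL : 0 ≤ L) (hLip : ∀ x v w r, |b x v r - b x w r| ≤ L * ‖v - w‖)
    (hc : ∀ ω, ContinuousOn (fun r => b (U ω) (θ ω r) r) (Icc 0 T))
    (hsde : ∀ᵐ ω ∂P, ∀ r ∈ Icc 0 T,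
      θ ω r = θ0 ω + (((∫ q in (0:ℝ)..r, b (U ω) (θ ω q) q) + B ω r : ℝ) : Torus))
    {f : Torus → ℝ} (hf : Continuous f) {s h : ℝ} (hs : 0 ≤ s) (hh : 0 ≤ h) (hsh : s + h ≤ T) :
    ∫ ω, f (θ ω s + ((B ω (s + h) - B ω s : ℝ) : Torus)) ∂P =
      ∫ p, f (p.1 + ((√h * p.2 : ℝ) : Torus))
        ∂((P.map (fun ω => θ ω s)).prod (gaussianReal 0 1)) := by
  obtain ⟨hU, -, hθ0, -, ⟨hB0, -, hBm, hBi⟩, -, hI⟩ := hdata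
  obtain ⟨hlaw, hind⟩ := hBi s (s + h) hs (by linarith) hsh
  obtain ⟨M, hM0, hM⟩ := torus_bdd hf
  have ccoe : Continuous (fun r : ℝ => (r : Torus)) := AddCircle.continuous_mk' _
  have hZ : Measurable (fun ω => B ω (s + h) - B ω s) := (hBm _).sub (hBm _)
  have hY : Measurable (fun ω => (fun r : Set.Icc (0:ℝ) s => B ω r)) :=
    measurable_pi_lambda _ fun r => hBm r
  have hX : Measurable (fun ω => (U ω, θ0 ω)) := hU.prodMk hθ0
  have h2 : IndepFun (fun ω => (U ω, θ0 ω))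
      (fun ω => ((fun r : Set.Icc (0:ℝ) s => B ω r), B ω (s + h) - B ω s)) P := by
    have := hI.comp (φ := id)
      (ψ := fun p : ℝ → ℝ => ((fun r : Set.Icc (0:ℝ) s => p r), p (s + h) - p s))
      measurable_id (by fun_prop)
    exact this
  have h3 := indep_incr P _ _ _ hX hY hZ hind h2
  -- the Euler approximations
  let Q : Ω → (ℝ × Torus) × (Set.Icc (0:ℝ) s → ℝ) :=
    fun ω => ((U ω, θ0 ω), fun r : Set.Icc (0:ℝ) s => B ω r)
  let Φ : ℕ → (ℝ × Torus) × (Set.Icc (0:ℝ) s → ℝ) → Torus := fun n q =>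
    eulerT b q.1.1 q.1.2 (fun r => q.2 (projIcc 0 s hs r)) (s / (n + 1)) (n + 1)
  have hΦ : ∀ n, Measurable (Φ n) := fun n => eulerT_meas b hb hs _ _
  have hQ : Measurable Q := hX.prodMk hY
  have hlim : ∀ᵐ ω ∂P, Tendsto (fun n => Φ n (Q ω)) atTop (𝓝 (θ ω s)) := by
    filter_upwards [hsde] with ω hω
    have hsub : Icc 0 s ⊆ Icc 0 T := Icc_subset_Icc le_rfl (by linarith)
    have := eulerT_tendsto b (U ω) (θ ω) (B ω) (θ0 ω) hs hL (hLip (U ω)) ((hc ω).mono hsub)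
      (hB0 ω) (fun r hr => hω r (hsub hr))
    refine this.congr fun n => ?_
    refine eulerT_congr _ _ _ _ _ _ _ fun k hk => ?_
    have : (k:ℝ) * (s / (n + 1)) ∈ Icc 0 s := by
      refine ⟨by positivity, ?_⟩
      rw [mul_div_assoc', div_le_iff₀ (by positivity)]
      have : (k:ℝ) ≤ n + 1 := by exact_mod_cast hk
      nlinarith
    simp [Q, projIcc_of_mem hs this]
  have hstep : ∀ n, ∫ ω, f (Φ n (Q ω) + ((B ω (s + h) - B ω s : ℝ) : Torus)) ∂P =
      ∫ p : Ω × ℝ, f (Φ n (Q p.1) + ((√h * p.2 : ℝ) : Torus)) ∂(P.prod (gaussianReal 0 1)) := by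
    intro n
    have e : P.map (fun ω => (Φ n (Q ω), B ω (s + h) - B ω s)) =
        (P.prod (gaussianReal 0 1)).map (fun p : Ω × ℝ => (Φ n (Q p.1), √h * p.2)) := by
      have i : IndepFun (fun ω => Φ n (Q ω)) (fun ω => B ω (s + h) - B ω s) P :=
        h3.comp (hΦ n) measurable_id
      have := (indepFun_iff_map_prod_eq_prod_map_map (by fun_prop) (by fun_prop)).1 i
      rw [this, hlaw]
      have g : gaussianReal 0 (Real.toNNReal (s + h - s))
          = (gaussianReal 0 1).map (fun z => √h * z) := by
        rw [gaussianReal_map_const_mul]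
        congr 1
        · simp
        · ext
          simp [Real.sq_sqrt hh, hh]
      rw [g, Measure.map_prod_map _ _ (by fun_prop) (by fun_prop)]
      rfl
    have hG : Measurable (fun q : Torus × ℝ => f (q.1 + (q.2 : Torus))) :=
      (by fun_prop : Continuous (fun q : Torus × ℝ => f (q.1 + (q.2 : Torus)))).measurable
    have a1 := integral_map (μ := P) (φ := fun ω => (Φ n (Q ω), B ω (s + h) - B ω s))
      (by fun_prop) hG.aestronglyMeasurable
    have a2 := integral_map (μ := P.prod (gaussianReal 0 1))
      (φ := fun p : Ω × ℝ => (Φ n (Q p.1), √h * p.2)) (by fun_prop) hG.aestronglyMeasurable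
    rw [e, a2] at a1
    exact a1.symm
  have l1 : Tendsto (fun n => ∫ ω, f (Φ n (Q ω) + ((B ω (s + h) - B ω s : ℝ) : Torus)) ∂P) atTop
      (𝓝 (∫ ω, f (θ ω s + ((B ω (s + h) - B ω s : ℝ) : Torus)) ∂P)) := by
    refine tendsto_integral_filter_of_dominated_convergence (fun _ => M) ?_ ?_ ?_ ?_
    · refine Eventually.of_forall fun n => Measurable.aestronglyMeasurable ?_
      exact hf.measurable.comp (((hΦ n).comp hQ).add (ccoe.measurable.comp hZ))
    · exact Eventually.of_forall fun n => ae_of_all _ fun ω => hM _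
    · exact integrable_const _
    · filter_upwards [hlim] with ω hω
      exact (hf.tendsto _).comp (hω.add_const _)
  have l2 : Tendsto (fun n => ∫ p : Ω × ℝ, f (Φ n (Q p.1) + ((√h * p.2 : ℝ) : Torus))
      ∂(P.prod (gaussianReal 0 1))) atTop
      (𝓝 (∫ p : Ω × ℝ, f (θ p.1 s + ((√h * p.2 : ℝ) : Torus)) ∂(P.prod (gaussianReal 0 1)))) := by
    refine tendsto_integral_filter_of_dominated_convergence (fun _ => M) ?_ ?_ ?_ ?_
    · refine Eventually.of_forall fun n => Measurable.aestronglyMeasurable ?_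
      exact hf.measurable.comp (((hΦ n).comp (hQ.comp measurable_fst)).add
        (ccoe.measurable.comp (measurable_snd.const_mul _)))
    · exact Eventually.of_forall fun n => ae_of_all _ fun ω => hM _
    · exact integrable_const _
    · have := (Measure.quasiMeasurePreserving_fst (μ := P) (ν := gaussianReal 0 1)).ae hlim
      filter_upwards [this] with p hp
      exact (hf.tendsto _).comp (hp.add_const _)
  simp_rw [hstep] at l1
  rw [tendsto_nhds_unique l1 l2]
  have e : (P.map (fun ω => θ ω s)).prod (gaussianReal 0 1)
      = (P.prod (gaussianReal 0 1)).map (fun p : Ω × ℝ => (θ p.1 s, p.2)) := by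
    have := Measure.map_prod_map P (gaussianReal 0 1) (hmeas s) measurable_id
    rw [Measure.map_id] at this
    exact this
  rw [e, integral_map]
  · exact ((hmeas s).comp measurable_fst).prodMk measurable_snd |>.aemeasurable
  · exact (by fun_prop : Continuous (fun q : Torus × ℝ =>
      f (q.1 + ((√h * q.2 : ℝ) : Torus)))).aestronglyMeasurable

/-- Drift part of the right derivative, pathwise. -/
theorem drift_lim {f f' : Torus → ℝ} (cf' : Continuous f')
    (hf : ∀ r : ℝ, HasDerivAt (fun s : ℝ => f (s : Torus)) (f' (r : Torus)) r)
    (v : Torus) {a β : ℝ → ℝ} {a0 : ℝ} (ha : Tendsto (fun h => a h / h) (𝓝[>] 0) (𝓝 a0))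
    (hβ : Tendsto β (𝓝[>] 0) (𝓝 0)) :
    Tendsto (fun h => (f (v + ((a h + β h : ℝ) : Torus)) - f (v + (β h : Torus))) / h) (𝓝[>] 0)
      (𝓝 (f' v * a0)) := by
  have ccoe : Continuous (fun r : ℝ => (r : Torus)) := AddCircle.continuous_mk' _
  have hst : HasStrictDerivAt (fun s : ℝ => f (v + (s : Torus))) (f' (v + ((0:ℝ) : Torus))) 0 :=
    hasStrictDerivAt_of_hasDerivAt_of_continuousAt
      (f' := fun s : ℝ => f' (v + (s : Torus)))
      (Eventually.of_forall fun y => hasDeriv_shift hf v y) (by fun_prop)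
  have hid : Tendsto (fun h : ℝ => h) (𝓝[>] 0) (𝓝 0) := tendsto_id.mono_left nhdsWithin_le_nhds
  have ha0 : Tendsto a (𝓝[>] 0) (𝓝 0) := by
    have := ha.mul hid
    rw [mul_zero] at this
    refine this.congr' ?_
    filter_upwards [self_mem_nhdsWithin] with h hh
    have : h ≠ 0 := ne_of_gt hh
    field_simp
  have hpair : Tendsto (fun h => (a h + β h, β h)) (𝓝[>] 0) (𝓝 ((0:ℝ), (0:ℝ))) := by
    have := (ha0.add hβ).prodMk_nhds hβ
    simpa using this
  have ho := hst.hasStrictFDerivAt.isLittleO.comp_tendsto hpair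
  have hO : a =O[𝓝[>] 0] (fun h : ℝ => h) := by
    have := ha.isBigO_one ℝ
    have h2 := this.mul (Asymptotics.isBigO_refl (fun h : ℝ => h) (𝓝[>] 0))
    simp only [one_mul] at h2
    refine h2.congr' ?_ EventuallyEq.rfl
    filter_upwards [self_mem_nhdsWithin] with h hh
    have : h ≠ 0 := ne_of_gt hh
    field_simp
  have ho2 : (fun h => f (v + ((a h + β h : ℝ) : Torus)) - f (v + (β h : Torus)) - a h * f' v)
      =o[𝓝[>] 0] (fun h : ℝ => h) := by
    refine Asymptotics.IsLittleO.trans_isBigO (g := a) ?_ hO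
    refine ho.congr (fun h => ?_) (fun h => ?_)
    · simp
    · simp
  have h3 := ho2.tendsto_div_nhds_zero
  have h4 := h3.add (ha.const_mul (f' v))
  rw [zero_add] at h4
  refine h4.congr fun h => ?_
  ring

theorem fp_abstract {Ω : Type*} [MeasurableSpace Ω] {T : ℝ}
    (P : Measure Ω) [IsProbabilityMeasure P] {μ0 : Measure Torus}
    {U : Ω → ℝ} {θ0 : Ω → Torus} {B : Ω → ℝ → ℝ}
    (hdata : MeanFieldData T P μ0 U θ0 B)
    {θ : Ω → ℝ → Torus} (hmeas : ∀ s : ℝ, Measurable (fun ω => θ ω s))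
    (hcont : ∀ ω, ContinuousOn (θ ω) (Set.Icc 0 T))
    (b : ℝ → Torus → ℝ → ℝ) (hb : ∀ s, Measurable (fun p : ℝ × Torus => b p.1 p.2 s))
    {L C : ℝ} (hL : 0 ≤ L) (hLip : ∀ x v w r, |b x v r - b x w r| ≤ L * ‖v - w‖)
    (hC : ∀ x v r, |b x v r| ≤ C)
    (hc : ∀ ω, ContinuousOn (fun r => b (U ω) (θ ω r) r) (Icc 0 T))
    (hsde : ∀ᵐ ω ∂P, ∀ r ∈ Icc 0 T,
      θ ω r = θ0 ω + (((∫ q in (0:ℝ)..r, b (U ω) (θ ω q) q) + B ω r : ℝ) : Torus))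
    {f f' f'' : Torus → ℝ} (cf'' : Continuous f'')
    (hf : ∀ r : ℝ, HasDerivAt (fun s : ℝ => f (s : Torus)) (f' (r : Torus)) r)
    (hf' : ∀ r : ℝ, HasDerivAt (fun s : ℝ => f' (s : Torus)) (f'' (r : Torus)) r)
    {t : ℝ} (ht : t ∈ Icc 0 T) :
    (∫ ω, f (θ ω t) ∂P) - ∫ ω, f (θ ω 0) ∂P =
      ∫ s in (0:ℝ)..t, ∫ ω, (1 / 2 * f'' (θ ω s) + f' (θ ω s) * b (U ω) (θ ω s) s) ∂P := by
  have hU : Measurable U := hdata.1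
  have hBm := hdata.2.2.2.2.1.2.2.1
  have hBc := hdata.2.2.2.2.1.2.1
  have cf := cont_of_deriv hf
  have cf' := cont_of_deriv hf'
  have ccoe : Continuous (fun r : ℝ => (r : Torus)) := AddCircle.continuous_mk' _
  obtain ⟨M0, hM00, hM0⟩ := torus_bdd cf
  obtain ⟨M1, hM10, hM1⟩ := torus_bdd cf'
  obtain ⟨M2, hM20, hM2⟩ := torus_bdd cf''
  have hC0 : 0 ≤ C := (abs_nonneg _).trans (hC 0 0 0)
  have hbm : ∀ s, Measurable (fun ω => b (U ω) (θ ω s) s) :=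
    fun s => (hb s).comp (hU.prodMk (hmeas s))
  have mf : ∀ s, Measurable (fun ω => f (θ ω s)) := fun s => cf.measurable.comp (hmeas s)
  have m1 : ∀ s, Measurable (fun ω => f' (θ ω s) * b (U ω) (θ ω s) s) :=
    fun s => (cf'.measurable.comp (hmeas s)).mul (hbm s)
  have m2 : ∀ s, Measurable (fun ω => 1 / 2 * f'' (θ ω s)) :=
    fun s => (cf''.measurable.comp (hmeas s)).const_mul _
  have bd1 : ∀ s ω, |f' (θ ω s) * b (U ω) (θ ω s) s| ≤ M1 * C := fun s ω => by
    rw [abs_mul]; exact mul_le_mul (hM1 _) (hC _ _ _) (abs_nonneg _) hM10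
  have bd2 : ∀ s ω, |1 / 2 * f'' (θ ω s)| ≤ M2 := fun s ω => by
    rw [abs_mul, abs_of_pos (by norm_num : (0:ℝ) < 1 / 2)]
    linarith [hM2 (θ ω s), abs_nonneg (f'' (θ ω s))]
  have i1 : ∀ s, Integrable (fun ω => f' (θ ω s) * b (U ω) (θ ω s) s) P := fun s =>
    Integrable.of_bound (m1 s).aestronglyMeasurable (M1 * C) (ae_of_all _ fun ω => bd1 s ω)
  have i2 : ∀ s, Integrable (fun ω => 1 / 2 * f'' (θ ω s)) P := fun s =>
    Integrable.of_bound (m2 s).aestronglyMeasurable M2 (ae_of_all _ fun ω => bd2 s ω)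
  have contφ : ContinuousOn (fun s => ∫ ω, f (θ ω s) ∂P) (Icc 0 T) := by
    refine continuousOn_of_dominated (bound := fun _ => M0) ?_ ?_ (integrable_const _) ?_
    · exact fun s _ => (mf s).aestronglyMeasurable
    · exact fun s _ => ae_of_all _ fun ω => hM0 _
    · exact ae_of_all _ fun ω => cf.comp_continuousOn (hcont ω)
  have contG : ContinuousOn (fun s => ∫ ω, (1 / 2 * f'' (θ ω s)
      + f' (θ ω s) * b (U ω) (θ ω s) s) ∂P) (Icc 0 T) := by
    refine continuousOn_of_dominated (bound := fun _ => M2 + M1 * C) ?_ ?_ (integrable_const _) ?_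
    · exact fun s _ => ((m2 s).add (m1 s)).aestronglyMeasurable
    · exact fun s _ => ae_of_all _ fun ω => (abs_add_le _ _).trans (add_le_add (bd2 s ω) (bd1 s ω))
    · exact ae_of_all _ fun ω => ((cf''.comp_continuousOn (hcont ω)).const_smul (1 / 2 : ℝ)).add
        ((cf'.comp_continuousOn (hcont ω)).mul (hc ω))
  have hsub : Icc 0 t ⊆ Icc 0 T := Icc_subset_Icc le_rfl ht.2
  symm
  refine intervalIntegral.integral_eq_sub_of_hasDeriv_right
    (f := fun s => ∫ ω, f (θ ω s) ∂P) ?_ ?_ ?_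
  · rw [uIcc_of_le ht.1]; exact contφ.mono hsub
  swap
  · refine ContinuousOn.intervalIntegrable ?_
    rw [uIcc_of_le ht.1]; exact contG.mono hsub
  intro s hs
  rw [min_eq_left ht.1, max_eq_right ht.1] at hs
  have hsT : s < T := hs.2.trans_le ht.2
  have hsm : s ∈ Icc 0 T := ⟨hs.1.le, hsT.le⟩
  have hν := Measure.isProbabilityMeasure_map (μ := P) (hmeas s).aemeasurable
  have evh : ∀ᶠ h : ℝ in 𝓝[>] 0, s + h ≤ T := by
    have : ∀ᶠ h : ℝ in 𝓝 0, h < T - s := eventually_lt_nhds (by linarith)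
    filter_upwards [nhdsWithin_le_nhds this] with h hh
    linarith
  -- Gaussian part
  have lim1 : Tendsto (fun h : ℝ =>
      ((∫ ω, f (θ ω s + ((B ω (s + h) - B ω s : ℝ) : Torus)) ∂P) - ∫ ω, f (θ ω s) ∂P) / h)
      (𝓝[>] 0) (𝓝 (∫ ω, 1 / 2 * f'' (θ ω s) ∂P)) := by
    have g := gauss_limit cf'' hf hf' (P.map (fun ω => θ ω s))
    rw [integral_map (hmeas s).aemeasurable cf.aestronglyMeasurable,
      integral_map (hmeas s).aemeasurable (by
        exact (cf''.const_smul (1 / 2 : ℝ)).aestronglyMeasurable)] at g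
    refine g.congr' ?_
    filter_upwards [evh, self_mem_nhdsWithin] with h hh hpos
    have hpos : 0 < h := hpos
    rw [incr_law P hdata hmeas b hb hL hLip hc hsde cf hs.1.le hpos.le hh]
  -- drift part
  have lim2 : Tendsto (fun h : ℝ =>
      ∫ ω, (f (θ ω (s + h)) - f (θ ω s + ((B ω (s + h) - B ω s : ℝ) : Torus))) / h ∂P)
      (𝓝[>] 0) (𝓝 (∫ ω, f' (θ ω s) * b (U ω) (θ ω s) s ∂P)) := by
    have hrel : ∀ᵐ ω ∂P, ∀ h, 0 ≤ h → s + h ≤ T → θ ω (s + h) = θ ω s +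
        (((∫ q in s..(s + h), b (U ω) (θ ω q) q) + (B ω (s + h) - B ω s) : ℝ) : Torus) := by
      filter_upwards [hsde] with ω hω h h0 hT
      have ms : s + h ∈ Icc 0 T := ⟨by linarith [hs.1], hT⟩
      have hint : ∀ c ∈ Icc 0 T,
          IntervalIntegrable (fun q => b (U ω) (θ ω q) q) volume 0 c := fun c hcc =>
        ((hc ω).mono (ordConnected_Icc.uIcc_subset ⟨le_rfl, hsm.1.trans hsm.2⟩ hcc)).intervalIntegrable
      rw [← intervalIntegral.integral_interval_sub_left (hint _ ms) (hint _ hsm), hω _ ms, hω _ hsm]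
      simp only [AddCircle.coe_add, AddCircle.coe_sub]
      abel
    have hA : ∀ ω h, 0 ≤ h → |∫ q in s..(s + h), b (U ω) (θ ω q) q| ≤ C * h := by
      intro ω h h0
      have := intervalIntegral.norm_integral_le_of_norm_le_const (a := s) (b := s + h)
        (f := fun q => b (U ω) (θ ω q) q) (C := C) (fun q _ => hC _ _ _)
      rwa [add_sub_cancel_left, abs_of_nonneg h0] at this
    have hfl : ∀ v : Torus, ∀ y z : ℝ, |f (v + ((y + z : ℝ) : Torus)) - f (v + (z : Torus))| ≤ M1 * |y| := by
      intro v y z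
      have := Convex.norm_image_sub_le_of_norm_hasDerivWithin_le
        (f := fun s : ℝ => f (v + (s : Torus))) (f' := fun s : ℝ => f' (v + (s : Torus)))
        (s := univ) (x := z) (y := y + z) (C := M1)
        (fun x _ => (hasDeriv_shift hf v x).hasDerivWithinAt) (fun x _ => hM1 _) convex_univ
        trivial trivial
      rwa [add_sub_cancel_right] at this
    refine tendsto_integral_filter_of_dominated_convergence (fun _ => M1 * C) ?_ ?_
      (integrable_const _) ?_
    · refine Eventually.of_forall fun h => Measurable.aestronglyMeasurable ?_
      exact ((mf _).sub (cf.measurable.comp ((hmeas s).add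
        (ccoe.measurable.comp ((hBm _).sub (hBm _)))))).div_const h
    · filter_upwards [evh, self_mem_nhdsWithin] with h hh hpos
      have hpos : 0 < h := hpos
      filter_upwards [hrel] with ω hω
      rw [hω h hpos.le hh, Real.norm_eq_abs, abs_div, abs_of_pos hpos, div_le_iff₀ hpos]
      refine (hfl _ _ _).trans ?_
      rw [mul_assoc]
      exact mul_le_mul_of_nonneg_left (hA ω h hpos.le) hM10
    · filter_upwards [hrel] with ω hω
      have hl := drift_lim (f := f) (f' := f') cf' hf (θ ω s)
        (a := fun h => ∫ q in s..(s + h), b (U ω) (θ ω q) q)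
        (β := fun h => B ω (s + h) - B ω s) (a0 := b (U ω) (θ ω s) s) ?_ ?_
      · refine hl.congr' ?_
        filter_upwards [evh, self_mem_nhdsWithin] with h hh hpos
        have hpos : 0 < h := hpos
        rw [hω h hpos.le hh]
      · rw [Metric.tendsto_nhds]
        intro ε hε
        have hcs := (hc ω) s hsm
        rw [Metric.continuousWithinAt_iff] at hcs
        obtain ⟨δ, hδ, hcs⟩ := hcs (ε / 2) (by linarith)
        have : ∀ᶠ h : ℝ in 𝓝 0, h < δ := eventually_lt_nhds hδ
        filter_upwards [evh, self_mem_nhdsWithin, nhdsWithin_le_nhds this] with h hh hpos hhδ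
        have hpos : 0 < h := hpos
        have ms : s + h ∈ Icc 0 T := ⟨by linarith [hs.1], hh⟩
        have hle := intervalIntegral.norm_integral_le_of_norm_le_const (a := s) (b := s + h)
          (f := fun q => b (U ω) (θ ω q) q - b (U ω) (θ ω s) s) (C := ε / 2) (fun q hq => by
            rw [uIoc_of_le (by linarith)] at hq
            have := @hcs q ⟨by linarith [hq.1, hs.1], hq.2.trans hh⟩ (by
              rw [Real.dist_eq, abs_of_pos (by linarith [hq.1])]; linarith [hq.2])
            rw [Real.dist_eq] at this
            exact this.le)
        rw [intervalIntegral.integral_sub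
          ((hc ω).mono (ordConnected_Icc.uIcc_subset hsm ms)).intervalIntegrable (by simp),
          intervalIntegral.integral_const, add_sub_cancel_left, abs_of_pos hpos, smul_eq_mul] at hle
        rw [Real.dist_eq]
        have e : (∫ q in s..(s + h), b (U ω) (θ ω q) q) / h - b (U ω) (θ ω s) s =
          ((∫ q in s..(s + h), b (U ω) (θ ω q) q) - h * b (U ω) (θ ω s) s) / h := by
          field_simp
        rw [e, abs_div, abs_of_pos hpos, div_lt_iff₀ hpos]
        rw [Real.norm_eq_abs] at hle
        nlinarith
      · have h1 : Tendsto (fun h : ℝ => s + h) (𝓝[>] 0) (𝓝[Icc 0 T] s) := by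
          refine tendsto_nhdsWithin_iff.2 ⟨?_, ?_⟩
          · have : Tendsto (fun h : ℝ => s + h) (𝓝 0) (𝓝 (s + 0)) := by
              exact (continuous_const.add continuous_id).tendsto 0
            rw [add_zero] at this
            exact this.mono_left nhdsWithin_le_nhds
          · filter_upwards [evh, self_mem_nhdsWithin] with h hh hpos
            have hpos : 0 < h := hpos
            exact ⟨by linarith [hs.1], hh⟩
        have h2 : Tendsto (fun h : ℝ => B ω (s + h)) (𝓝[>] 0) (𝓝 (B ω s)) :=
          Tendsto.comp (hBc ω s hsm) h1
        simpa using h2.sub_const (B ω s)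
  have lim := lim1.add lim2
  rw [← integral_add (i2 s) (i1 s)] at lim
  rw [hasDerivWithinAt_iff_tendsto_slope' (by simp)]
  have hshift : Tendsto (fun r : ℝ => r - s) (𝓝[>] s) (𝓝[>] 0) := by
    refine tendsto_nhdsWithin_iff.2 ⟨?_, ?_⟩
    · have : Tendsto (fun r : ℝ => r - s) (𝓝 s) (𝓝 (s - s)) :=
        (continuous_id.sub continuous_const).tendsto s
      rw [sub_self] at this
      exact this.mono_left nhdsWithin_le_nhds
    · filter_upwards [self_mem_nhdsWithin] with r hr
      simpa using hr
  refine (lim.comp hshift).congr fun r => ?_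
  have j1 : Integrable (fun ω => f (θ ω r)) P :=
    Integrable.of_bound (mf r).aestronglyMeasurable M0 (ae_of_all _ fun ω => hM0 _)
  have j2 : Integrable (fun ω => f (θ ω s + ((B ω r - B ω s : ℝ) : Torus))) P :=
    Integrable.of_bound (cf.measurable.comp ((hmeas s).add
        (ccoe.measurable.comp ((hBm _).sub (hBm _))))).aestronglyMeasurable M0
        (ae_of_all _ fun ω => hM0 _)
  simp only [Function.comp_apply, add_sub_cancel]
  rw [integral_div, integral_sub j1 j2, slope_def_field]
  ring

/-- The interaction field `E[W(x,U) Γ(v,θ_s)]`. -/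
def Hfield {Ω : Type*} [MeasurableSpace Ω] (P : Measure Ω) (Γ : Torus → Torus → ℝ) (W : ℝ → ℝ → ℝ)
    (U : Ω → ℝ) (θ : Ω → ℝ → Torus) (x : ℝ) (v : Torus) (s : ℝ) : ℝ :=
  ∫ ω, W x (U ω) * Γ v (θ ω s) ∂P

/-- The law of `(U, θ_s)` is disintegrated by the kernel. -/
theorem law_disint {Ω : Type*} [MeasurableSpace Ω] (P : Measure Ω) [IsProbabilityMeasure P]
    {U : Ω → ℝ} (hU : Measurable U) {X : Ω → Torus} (hX : Measurable X)
    (κ : Kernel ℝ Torus) [IsMarkovKernel κ]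
    (hd : ∀ S : Set ℝ, MeasurableSet S → ∀ A : Set Torus, MeasurableSet A →
      P {ω | U ω ∈ S ∧ X ω ∈ A} = ∫⁻ y in S ∩ I01, κ y A ∂volume) :
    P.map (fun ω => (U ω, X ω)) = (volume.restrict I01) ⊗ₘ κ := by
  have hm : Measurable (fun ω => (U ω, X ω)) := hU.prodMk hX
  have := Measure.isProbabilityMeasure_map (μ := P) hm.aemeasurable
  refine Measure.ext_prod fun {S A} hS hA => ?_
  rw [Measure.map_apply hm (hS.prod hA), Measure.compProd_apply_prod hS hA,
    Measure.restrict_restrict hS, ← hd S hS A hA]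
  rfl

theorem disint_integral {Ω : Type*} [MeasurableSpace Ω] (P : Measure Ω) [IsProbabilityMeasure P]
    {U : Ω → ℝ} (hU : Measurable U) {X : Ω → Torus} (hX : Measurable X)
    (κ : Kernel ℝ Torus) [IsMarkovKernel κ]
    (hd : ∀ S : Set ℝ, MeasurableSet S → ∀ A : Set Torus, MeasurableSet A →
      P {ω | U ω ∈ S ∧ X ω ∈ A} = ∫⁻ y in S ∩ I01, κ y A ∂volume)
    {g : ℝ → Torus → ℝ} (hg : Measurable (fun p : ℝ × Torus => g p.1 p.2)) {C : ℝ}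
    (hC : ∀ x v, |g x v| ≤ C) :
    ∫ ω, g (U ω) (X ω) ∂P = ∫ x in I01, ∫ v, g x v ∂(κ x) := by
  have hl := law_disint P hU hX κ hd
  have hm : Measurable (fun ω => (U ω, X ω)) := hU.prodMk hX
  have hi : Integrable (fun p : ℝ × Torus => g p.1 p.2) ((volume.restrict I01) ⊗ₘ κ) :=
    Integrable.of_bound hg.aestronglyMeasurable C (ae_of_all _ fun p => hC _ _)
  have h1 := integral_map (μ := P) hm.aemeasurable (f := fun p : ℝ × Torus => g p.1 p.2)
    hg.aestronglyMeasurable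
  rw [hl, Measure.integral_compProd hi] at h1
  exact h1.symm

/-- Proposition 2.1, Fokker–Planck equation: if `θ` solves the nonlinear
equation for the labeled graphon `W` with data `(U, θ0, B)`, `μ̄_t = Law(θ_t)` and `μ^x_t`
is a regular conditional distribution of `θ_t` given `U = x`, then `μ̄` solves the
graphon-weighted nonlinear Fokker–Planck equation weakly: for every `C²` function
`f : 𝕋 → ℝ` and every `t ∈ [0,T]`,
`∫ f dμ̄_t − ∫ f dμ̄₀ = ∫₀ᵗ [ ∫ (½ f'' + f' F) dμ̄_s
  + ∫_{I×I} W(x,y) ( ∫∫ f'(θ) Γ(θ,u) μ^y_s(du) μ^x_s(dθ) ) dy dx ] ds`. -/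
theorem mean_field_fokker_planck
    {Ω : Type*} [MeasurableSpace Ω] (T : ℝ) (hT : 0 < T)
    (P : Measure Ω) [IsProbabilityMeasure P]
    (F : Torus → ℝ) (Γ : Torus → Torus → ℝ) (hF : BddLip F) (hΓ : BddLip2 Γ)
    (W : ℝ → ℝ → ℝ) (hW : IsGraphon W)
    (μ0 : Measure Torus) (hμ0 : IsProbabilityMeasure μ0)
    (U : Ω → ℝ) (θ0 : Ω → Torus) (B : Ω → ℝ → ℝ)
    (hdata : MeanFieldData T P μ0 U θ0 B)
    (θ : Ω → ℝ → Torus) (μker : ℝ → ℝ → Measure Torus)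
    (hθ : IsMeanFieldSolution T P F Γ W U θ0 B θ μker) :
    ∀ (f f' f'' : Torus → ℝ), Continuous f'' →
      (∀ r : ℝ, HasDerivAt (fun s : ℝ => f (s : Torus)) (f' (r : Torus)) r) →
      (∀ r : ℝ, HasDerivAt (fun s : ℝ => f' (s : Torus)) (f'' (r : Torus)) r) →
      ∀ t ∈ Set.Icc (0:ℝ) T,
        (∫ u, f u ∂(P.map (fun ω => θ ω t))) - (∫ u, f u ∂μ0) =
          ∫ s in Set.Icc (0:ℝ) t,
            ((∫ u, ((1/2) * f'' u + f' u * F u) ∂(P.map (fun ω => θ ω s))) +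
              ∫ x in I01, ∫ y in I01, W x y *
                ∫ v, (f' v * ∫ u, Γ v u ∂(μker y s)) ∂(μker x s)) := by
  obtain ⟨⟨KF, hKF⟩, MF, hMF⟩ := hF
  obtain ⟨⟨KΓ, hKΓ⟩, MΓ, hMΓ⟩ := hΓ
  obtain ⟨hWm, hWb, -⟩ := hW
  have hU : Measurable U := hdata.1
  have hB0 := hdata.2.2.2.2.1.1
  have hθ0m : Measurable θ0 := hdata.2.2.1
  have hθ0 : P.map θ0 = μ0 := hdata.2.2.2.1
  have hmeas := hθ.meas
  have hcont := hθ.cont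
  have cF : Continuous F := hKF.continuous
  have cΓ : Continuous (fun p : Torus × Torus => Γ p.1 p.2) := hKΓ.continuous
  have hMF0 : 0 ≤ MF := (abs_nonneg _).trans (hMF 0)
  have hMΓ0 : 0 ≤ MΓ := (abs_nonneg _).trans (hMΓ 0 0)
  have hWabs : ∀ x y, |W x y| ≤ 1 := fun x y =>
    abs_le.2 ⟨by linarith [(hWb x y).1], (hWb x y).2⟩
  have hWΓ : ∀ x y v u, |W x y * Γ v u| ≤ MΓ := fun x y v u => by
    rw [abs_mul]
    have := mul_le_mul (hWabs x y) (hMΓ v u) (abs_nonneg _) zero_le_one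
    simpa using this
  let κ : ℝ → Kernel ℝ Torus := fun s => ⟨fun y => μker y s, hθ.kerMeas s⟩
  have hκ : ∀ s, IsMarkovKernel (κ s) := fun s => ⟨fun y => hθ.kerProb y s⟩
  have hdis : ∀ s ∈ Icc 0 T, ∀ (g : ℝ → Torus → ℝ) (C : ℝ),
      Measurable (fun p : ℝ × Torus => g p.1 p.2) → (∀ x v, |g x v| ≤ C) →
      ∫ ω, g (U ω) (θ ω s) ∂P = ∫ x in I01, ∫ v, g x v ∂(μker x s) := fun s hs g C hg hC =>
    disint_integral P hU (hmeas s) (κ s) (hθ.disint s hs) hg hC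
  let H := Hfield P Γ W U θ
  have mWΓ : ∀ x v s, Measurable (fun ω => W x (U ω) * Γ v (θ ω s)) := fun x v s =>
    (hWm.comp (measurable_const.prodMk hU)).mul
      (cΓ.measurable.comp (measurable_const.prodMk (hmeas s)))
  have iWΓ : ∀ x v s, Integrable (fun ω => W x (U ω) * Γ v (θ ω s)) P := fun x v s =>
    Integrable.of_bound (mWΓ x v s).aestronglyMeasurable MΓ (ae_of_all _ fun ω => hWΓ _ _ _ _)
  have hHb : ∀ x v s, |H x v s| ≤ MΓ := fun x v s => by
    have := norm_integral_le_of_norm_le_const (μ := P)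
      (f := fun ω => W x (U ω) * Γ v (θ ω s)) (C := MΓ) (ae_of_all _ fun ω => hWΓ _ _ _ _)
    simp only [probReal_univ, mul_one] at this
    exact this
  have hHL : ∀ x v w s, |H x v s - H x w s| ≤ KΓ * ‖v - w‖ := fun x v w s => by
    change |(∫ ω, W x (U ω) * Γ v (θ ω s) ∂P) - ∫ ω, W x (U ω) * Γ w (θ ω s) ∂P| ≤ _
    rw [← integral_sub (iWΓ _ _ _) (iWΓ _ _ _)]
    have := norm_integral_le_of_norm_le_const (μ := P)
      (f := fun ω => W x (U ω) * Γ v (θ ω s) - W x (U ω) * Γ w (θ ω s)) (C := KΓ * ‖v - w‖)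
      (ae_of_all _ fun ω => by
        rw [← mul_sub, norm_mul]
        have h1 := hKΓ.dist_le_mul (v, θ ω s) (w, θ ω s)
        rw [Prod.dist_eq, dist_self, max_eq_left dist_nonneg, dist_eq_norm v w, dist_eq_norm] at h1
        have h2 := mul_le_mul (hWabs x (U ω)) h1 (norm_nonneg _) zero_le_one
        rw [one_mul] at h2
        exact h2)
    simpa using this
  have hHm : ∀ s, Measurable (fun p : ℝ × Torus => H p.1 p.2 s) := fun s => by
    have : StronglyMeasurable (Function.uncurry
        (fun (p : ℝ × Torus) (ω : Ω) => W p.1 (U ω) * Γ p.2 (θ ω s))) := by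
      refine Measurable.stronglyMeasurable ?_
      have a1 : Measurable (fun q : (ℝ × Torus) × Ω => W q.1.1 (U q.2)) :=
        hWm.comp (measurable_fst.fst.prodMk (hU.comp measurable_snd))
      have a2 : Measurable (fun q : (ℝ × Torus) × Ω => Γ q.1.2 (θ q.2 s)) :=
        cΓ.measurable.comp (measurable_fst.snd.prodMk ((hmeas s).comp measurable_snd))
      exact a1.mul a2
    exact this.integral_prod_right.measurable
  have hHc : ∀ x ω, ContinuousOn (fun r => H x (θ ω r) r) (Icc 0 T) := fun x ω => by
    refine continuousOn_of_dominated (bound := fun _ => MΓ) ?_ ?_ (integrable_const _) ?_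
    · exact fun r _ => (mWΓ x _ r).aestronglyMeasurable
    · exact fun r _ => ae_of_all _ fun ω' => hWΓ _ _ _ _
    · refine ae_of_all _ fun ω' => ContinuousOn.mul continuousOn_const ?_
      exact cΓ.comp_continuousOn ((hcont ω).prodMk (hcont ω'))
  have hHeq : ∀ x v, ∀ s ∈ Icc 0 T, ∫ y in I01, W x y * ∫ u, Γ v u ∂(μker y s) = H x v s := by
    intro x v s hs
    have := hdis s hs (fun y u => W x y * Γ v u) MΓ
      ((hWm.comp (measurable_const.prodMk measurable_fst)).mul
        (cΓ.measurable.comp (measurable_const.prodMk measurable_snd)))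
      (fun y u => hWΓ _ _ _ _)
    simp_rw [integral_const_mul] at this
    exact this.symm
  let b : ℝ → Torus → ℝ → ℝ := fun x v s => F v + H x v s
  have hb : ∀ s, Measurable (fun p : ℝ × Torus => b p.1 p.2 s) := fun s =>
    (cF.measurable.comp measurable_snd).add (hHm s)
  have hLip : ∀ x v w r, |b x v r - b x w r| ≤ ((KF:ℝ) + KΓ) * ‖v - w‖ := fun x v w r => by
    have h1 := hKF.dist_le_mul v w
    rw [Real.dist_eq, dist_eq_norm] at h1
    have h2 := hHL x v w r
    have e : b x v r - b x w r = (F v - F w) + (H x v r - H x w r) := by simp only [b]; ring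
    rw [e, add_mul]
    exact (abs_add_le _ _).trans (add_le_add h1 h2)
  have hC : ∀ x v r, |b x v r| ≤ MF + MΓ := fun x v r =>
    (abs_add_le _ _).trans (add_le_add (hMF v) (hHb x v r))
  have hc : ∀ ω, ContinuousOn (fun r => b (U ω) (θ ω r) r) (Icc 0 T) := fun ω =>
    (cF.comp_continuousOn (hcont ω)).add (hHc (U ω) ω)
  have hsde : ∀ᵐ ω ∂P, ∀ r ∈ Icc 0 T,
      θ ω r = θ0 ω + (((∫ q in (0:ℝ)..r, b (U ω) (θ ω q) q) + B ω r : ℝ) : Torus) := by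
    filter_upwards [hθ.sde] with ω hω r hr
    rw [hω r hr]
    congr 3
    have hsub : Icc 0 r ⊆ Icc 0 T := Icc_subset_Icc le_rfl hr.2
    rw [drift, intervalIntegral.integral_of_le hr.1, ← integral_Icc_eq_integral_Ioc]
    have e1 : ∫ s in Icc 0 r, ∫ y in I01, W (U ω) y * ∫ u, Γ (θ ω s) u ∂(μker y s)
        = ∫ s in Icc 0 r, H (U ω) (θ ω s) s :=
      setIntegral_congr_fun measurableSet_Icc fun s hs => hHeq _ _ s (hsub hs)
    have j1 : IntegrableOn (fun s => F (θ ω s)) (Icc 0 r) :=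
      ((cF.comp_continuousOn (hcont ω)).mono hsub).integrableOn_Icc
    have j2 : IntegrableOn (fun s => H (U ω) (θ ω s) s) (Icc 0 r) :=
      ((hHc (U ω) ω).mono hsub).integrableOn_Icc
    rw [e1, ← integral_add j1 j2]
  intro f f' f'' cf'' hf hf' t ht
  have cf := cont_of_deriv hf
  have cf' := cont_of_deriv hf'
  have main := fp_abstract P hdata hmeas hcont b hb (by positivity) hLip hC hc hsde cf'' hf hf' ht
  have e0 : ∫ u, f u ∂μ0 = ∫ ω, f (θ ω 0) ∂P := by
    rw [← hθ0, integral_map hθ0m.aemeasurable cf.aestronglyMeasurable]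
    refine integral_congr_ae ?_
    filter_upwards [hsde] with ω hω
    have := hω 0 ⟨le_rfl, hT.le⟩
    simp only [intervalIntegral.integral_same, hB0 ω, add_zero] at this
    rw [this]
    simp
  rw [integral_map (hmeas t).aemeasurable cf.aestronglyMeasurable, e0, main,
    intervalIntegral.integral_of_le ht.1, ← integral_Icc_eq_integral_Ioc]
  refine setIntegral_congr_fun measurableSet_Icc fun s hs => ?_
  have hsT : s ∈ Icc 0 T := ⟨hs.1, hs.2.trans ht.2⟩
  obtain ⟨M1, hM10, hM1⟩ := torus_bdd cf'
  obtain ⟨M2, hM20, hM2⟩ := torus_bdd cf''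
  have c1 : Continuous (fun u => (1 / 2) * f'' u + f' u * F u) := by fun_prop
  obtain ⟨M3, hM30, hM3⟩ := torus_bdd c1
  have k1 : Integrable (fun ω => (1 / 2) * f'' (θ ω s) + f' (θ ω s) * F (θ ω s)) P :=
    Integrable.of_bound (c1.measurable.comp (hmeas s)).aestronglyMeasurable M3
      (ae_of_all _ fun ω => hM3 _)
  have mg : Measurable (fun p : ℝ × Torus => f' p.2 * H p.1 p.2 s) :=
    (cf'.measurable.comp measurable_snd).mul (hHm s)
  have bg : ∀ x v, |f' v * H x v s| ≤ M1 * MΓ := fun x v => by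
    rw [abs_mul]; exact mul_le_mul (hM1 v) (hHb x v s) (abs_nonneg _) hM10
  have k2 : Integrable (fun ω => f' (θ ω s) * H (U ω) (θ ω s) s) P :=
    Integrable.of_bound (mg.comp (hU.prodMk (hmeas s))).aestronglyMeasurable (M1 * MΓ)
      (ae_of_all _ fun ω => bg _ _)
  have split : ∫ ω, (1 / 2 * f'' (θ ω s) + f' (θ ω s) * b (U ω) (θ ω s) s) ∂P =
      (∫ ω, ((1 / 2) * f'' (θ ω s) + f' (θ ω s) * F (θ ω s)) ∂P)
        + ∫ ω, f' (θ ω s) * H (U ω) (θ ω s) s ∂P := by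
    rw [← integral_add k1 k2]
    refine integral_congr_ae (ae_of_all _ fun ω => ?_)
    simp only [b]
    ring
  beta_reduce
  rw [split, integral_map (hmeas s).aemeasurable c1.aestronglyMeasurable,
    hdis s hsT (fun x v => f' v * H x v s) (M1 * MΓ) mg bg]
  congr 1
  refine integral_congr_ae (ae_of_all _ fun x => ?_)
  change ∫ v, f' v * H x v s ∂(μker x s) = _
  have := hθ.kerProb x s
  have hγ : Measurable (fun q : Torus × ℝ => ∫ u, Γ q.1 u ∂(μker q.2 s)) := by
    have : StronglyMeasurable (fun q : Torus × ℝ => ∫ u, Γ q.1 u ∂((κ s).comap Prod.snd measurable_snd q)) :=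
      StronglyMeasurable.integral_kernel_prod_right (κ := (κ s).comap Prod.snd measurable_snd)
        (f := fun (q : Torus × ℝ) u => Γ q.1 u)
        (cΓ.measurable.comp (measurable_fst.fst.prodMk measurable_snd)).stronglyMeasurable
    exact this.measurable
  have bγ : ∀ v y, |∫ u, Γ v u ∂(μker y s)| ≤ MΓ := fun v y => by
    have := hθ.kerProb y s
    have := norm_integral_le_of_norm_le_const (μ := μker y s)
      (f := fun u => Γ v u) (C := MΓ) (ae_of_all _ fun u => hMΓ _ _)
    simpa using this
  have hfin : IsFiniteMeasure (volume.restrict I01) := ⟨by simp⟩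
  have sw := integral_integral_swap (μ := μker x s) (ν := volume.restrict I01)
    (f := fun v y => f' v * (W x y * ∫ u, Γ v u ∂(μker y s))) (by
      refine Integrable.of_bound (C := M1 * (1 * MΓ)) (Measurable.aestronglyMeasurable ?_)
        (ae_of_all _ fun q => ?_)
      · exact (cf'.measurable.comp measurable_fst).mul
          ((hWm.comp (measurable_const.prodMk measurable_snd)).mul hγ)
      · simp only [Function.uncurry, norm_mul]
        exact mul_le_mul (hM1 _) (mul_le_mul (hWabs _ _) (bγ _ _) (norm_nonneg _) zero_le_one)
          (by positivity) hM10)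
  simp_rw [integral_const_mul, hHeq _ _ s hsT] at sw
  rw [sw]
  refine integral_congr_ae (ae_of_all _ fun y => ?_)
  beta_reduce
  rw [← integral_const_mul]
  refine integral_congr_ae (ae_of_all _ fun v => ?_)
  beta_reduce
  ring
end
end

section
/- (Relabeling invariance.) Let φ : I → I be a measure-preserving bijection and let θ be a solution of the nonlinear system for the labeled graphon W with initial datum θ₀ and driving processes B. Define ψ^x := θ^{φ(x)}, the relabeled initial datum x ↦ θ^{φ(x)}_0, the relabeled drivers x ↦ B^{φ(x)}, and the relabeled graphon W^φ(x,y) := W(φ(x), φ(y)). Then ψ is a solution of the nonlinear system for W^φ with the relabeled initial datum and drivers, and the mixtures of path laws coincide: ∫_I Law(θ^x) dx = ∫_I Law(ψ^x) dx as measures on C([0,T],𝕋). -/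
open MeasureTheory ProbabilityTheory Real Set Filter Topology

noncomputable section

/-- The law at time `s` of the process `θ` under `P`. -/
def pathLaw {Ω : Type*} [MeasurableSpace Ω] (P : Measure Ω) (θ : Ω → ℝ → Torus) (s : ℝ) :
    Measure Torus := P.map (fun ω => θ ω s)

/-- `θ : I × Ω → C([0,T],𝕋)` (jointly measurable, continuous in time) is a solution of the
labeled nonlinear system for the labeled graphon `W` with initial datum `θ0` and driving
processes `B`: writing `μ^y_s` for the law of `θ^y_s`, for a.e. `x ∈ I`, `P`-a.s., for all
`t ∈ [0,T]`,
`θ^x_t = θ^x_0 + π( ∫₀ᵗ F(θ^x_s) ds + ∫₀ᵗ ∫_I W(x,y) (∫_𝕋 Γ(θ^x_s,u) μ^y_s(du)) dy ds + B^x_t )`. -/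
structure IsLabeledSolution {Ω : Type*} [MeasurableSpace Ω] (T : ℝ) (P : Measure Ω)
    (F : Torus → ℝ) (Γ : Torus → Torus → ℝ) (W : ℝ → ℝ → ℝ)
    (θ0 : ℝ → Ω → Torus) (B : ℝ → Ω → ℝ → ℝ) (θ : ℝ → Ω → ℝ → Torus) : Prop where
  jointMeas : Measurable (fun p : ℝ × Ω => θ p.1 p.2)
  cont : ∀ x ω, ContinuousOn (θ x ω) (Set.Icc 0 T)
  sde : ∀ᵐ x ∂(volume.restrict I01), ∀ᵐ ω ∂P, ∀ t ∈ Set.Icc (0:ℝ) T,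
    θ x ω t = θ0 x ω +
      ((drift F Γ W (fun y s => pathLaw P (θ y) s) x (θ x ω) t + B x ω t : ℝ) : Torus)

/-- A measure-preserving bijection of `I = [0,1]` (with Lebesgue measure). -/
def IsMPBij (φ : ℝ → ℝ) : Prop :=
  MeasureTheory.MeasurePreserving φ (volume.restrict I01) (volume.restrict I01) ∧
    Set.BijOn φ I01 I01

/-- relabeling invariance: if `φ` is a measure-preserving bijection of
`I` and `θ` solves the nonlinear system for `W`, then `ψ^x := θ^{φ(x)}` solves the nonlinear
system for the relabeled graphon `W^φ(x,y) = W(φ(x),φ(y))` with the relabeled initial datum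
and drivers, and the mixtures of path laws coincide:
`∫_I Law(θ^x) dx = ∫_I Law(ψ^x) dx`. -/
theorem relabeling_invariance
    {Ω : Type*} [MeasurableSpace Ω] (T : ℝ) (hT : 0 < T)
    (P : Measure Ω) [IsProbabilityMeasure P]
    (F : Torus → ℝ) (Γ : Torus → Torus → ℝ) (hF : BddLip F) (hΓ : BddLip2 Γ)
    (W : ℝ → ℝ → ℝ) (hW : IsGraphon W)
    (φ : ℝ → ℝ) (hφ : IsMPBij φ)
    (θ0 : ℝ → Ω → Torus) (B : ℝ → Ω → ℝ → ℝ) (θ : ℝ → Ω → ℝ → Torus)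
    (hθ : IsLabeledSolution T P F Γ W θ0 B θ) :
    IsLabeledSolution T P F Γ (fun x y => W (φ x) (φ y))
        (fun x => θ0 (φ x)) (fun x => B (φ x)) (fun x => θ (φ x)) ∧
      (volume.restrict I01).bind (fun x => P.map (θ x)) =
        (volume.restrict I01).bind (fun x => P.map (θ (φ x))) := by
  obtain ⟨hmp, -⟩ := hφ
  have hφm : Measurable φ := hmp.measurable
  have hjm := hθ.jointMeas
  refine ⟨⟨?_, ?_, ?_⟩, ?_⟩
  · exact hjm.comp ((hφm.comp measurable_fst).prodMk measurable_snd)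
  · intro x ω
    exact hθ.cont (φ x) ω
  · have key : ∀ (x s : ℝ) (a : Torus),
        (∫ y in I01, W x (φ y) * ∫ u, Γ a u ∂(pathLaw P (θ (φ y)) s)) =
          ∫ y in I01, W x y * ∫ u, Γ a u ∂(pathLaw P (θ y) s) := by
      intro x s a
      have hΓc : Continuous (fun u => Γ a u) := by
        obtain ⟨⟨K, hK⟩, -⟩ := hΓ
        exact hK.continuous.comp (Continuous.prodMk_right a)
      have hev : Measurable (fun p : ℝ × Ω => θ p.1 p.2 s) := (measurable_pi_apply s).comp hjm
      have heq : ∀ y, (∫ u, Γ a u ∂(pathLaw P (θ y) s)) = ∫ ω, Γ a (θ y ω s) ∂P := by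
        intro y
        unfold pathLaw
        exact integral_map (hev.comp measurable_prodMk_left).aemeasurable
          hΓc.measurable.aestronglyMeasurable
      have hg : StronglyMeasurable
          (fun y => W x y * ∫ u, Γ a u ∂(pathLaw P (θ y) s)) := by
        simp only [heq]
        refine StronglyMeasurable.mul
          (hW.1.comp measurable_prodMk_left).stronglyMeasurable ?_
        exact StronglyMeasurable.integral_prod_right
          (f := fun (y : ℝ) (ω : Ω) => Γ a (θ y ω s)) (hΓc.measurable.comp hev).stronglyMeasurable
      have h := integral_map (μ := volume.restrict I01) hφm.aemeasurable
        (f := fun y => W x y * ∫ u, Γ a u ∂(pathLaw P (θ y) s)) hg.aestronglyMeasurable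
      rw [hmp.map_eq] at h
      exact h.symm
    filter_upwards [hmp.quasiMeasurePreserving.ae hθ.sde] with x hx
    filter_upwards [hx] with ω hω t ht
    have h := hω t ht
    simp only [drift, key] at h ⊢
    exact h
  · have hf : Measurable (fun x => P.map (θ x)) := by
      have hx : ∀ x, Measurable (θ x) := fun x => hjm.comp measurable_prodMk_left
      refine Measure.measurable_of_measurable_coe _ fun s hs => ?_
      simp only [Measure.map_apply (hx _) hs]
      exact measurable_measure_prodMk_left (hjm hs)
    unfold Measure.bind
    have h := Measure.map_map (μ := volume.restrict I01) hf hφm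
    rw [hmp.map_eq] at h
    rw [h]
    rfl
end
end
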